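/- Let n ≥ 1 be an integer, let a, a' ∈ ℝ^n, and suppose there is an index i₀ such that a_i = a'_i for all i ≠ i₀. Then ∑_{j=1}^{n} | a_{(j)} − a'_{(j)} | = | a_{i₀} − a'_{i₀} |, where a_{(1)} ≥ ⋯ ≥ a_{(n)} and a'_{(1)} ≥ ⋯ ≥ a'_{(n)} are the sorted (nonincreasing) rearrangements of a and a'. (This is the telescoping bound on order statistics established in the proof of Theorem 3.) -/

import Mathlib

/-- `sortDesc a` is the vector `a : Fin n → ℝ` sorted in nonincreasing order (with multiplicity). -/
noncomputable def sortDesc {n : ℕ} (a : Fin n → ℝ) : Fin n → ℝ :=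
  fun j => a (Tuple.sort (fun i => -a i) j)

/-!
Sorting is monotone and preserves sums, so for comparable vectors it preserves the `ℓ¹`-distance:
all coordinate differences have the same sign, before and after sorting. Two vectors that differ in
a single coordinate are comparable, and their `ℓ¹`-distance is the difference in that coordinate.

Monotonicity of sorting is a pigeonhole argument: if `a ≤ b`, the `j` indices carrying the `j`
largest entries of `a` cannot all be among the `j - 1` indices carrying the largest entries of `b`.
-/

section Rearrangement

variable {ι α : Type*} [LinearOrder ι] [LocallyFiniteOrderBot ι] [Preorder α]

theorem exists_le_le_apply_of_injective {f : ι → ι} (hf : f.Injective) (j : ι) :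
    ∃ k ≤ j, j ≤ f k := by
  by_contra! hlt
  have hmapsTo : Set.MapsTo f (Finset.Iic j) (Finset.Iio j) := fun k hk => by
    simpa using hlt k (by simpa using hk)
  have hcard : (Finset.Iic j).card ≤ (Finset.Iio j).card :=
    Finset.card_le_card_of_injOn f hmapsTo hf.injOn
  rw [Finset.Iic_eq_cons_Iio, Finset.card_cons] at hcard
  exact Nat.not_succ_le_self _ hcard

theorem comp_perm_le_comp_perm_of_antitone {a b : ι → α} {σ τ : Equiv.Perm ι}
    (ha : Antitone (a ∘ σ)) (hb : Antitone (b ∘ τ)) (hab : a ≤ b) : a ∘ σ ≤ b ∘ τ := by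
  intro j
  obtain ⟨k, hkj, hjk⟩ := exists_le_le_apply_of_injective (τ.symm.injective.comp σ.injective) j
  calc
    a (σ j) ≤ a (σ k) := ha hkj
    _ ≤ b (σ k) := hab (σ k)
    _ = b (τ (τ.symm (σ k))) := by rw [τ.apply_symm_apply]
    _ ≤ b (τ j) := hb hjk

end Rearrangement

section DifferAtOneCoordinate

variable {ι : Type*} {α : ι → Type*} {i₀ : ι} {a b : ∀ i, α i}

theorem le_iff_apply_le_of_forall_ne_eq [∀ i, Preorder (α i)] (h : ∀ i, i ≠ i₀ → a i = b i) :
    a ≤ b ↔ a i₀ ≤ b i₀ := by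
  refine ⟨fun hab => hab i₀, fun hab i => ?_⟩
  obtain rfl | hi := eq_or_ne i i₀
  · exact hab
  · exact (h i hi).le

theorem le_or_le_of_forall_ne_eq [∀ i, LinearOrder (α i)] (h : ∀ i, i ≠ i₀ → a i = b i) :
    a ≤ b ∨ b ≤ a := by
  rw [le_iff_apply_le_of_forall_ne_eq h,
    le_iff_apply_le_of_forall_ne_eq fun i hi => (h i hi).symm]
  exact le_total (a i₀) (b i₀)

end DifferAtOneCoordinate

theorem sum_abs_sub_of_le {ι G : Type*} [AddCommGroup G] [LinearOrder G] [IsOrderedAddMonoid G]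
    {s : Finset ι} {a b : ι → G} (hab : ∀ i ∈ s, a i ≤ b i) :
    ∑ i ∈ s, |a i - b i| = ∑ i ∈ s, b i - ∑ i ∈ s, a i := by
  rw [← Finset.sum_sub_distrib]
  refine Finset.sum_congr rfl fun i hi => ?_
  rw [abs_of_nonpos (sub_nonpos.2 (hab i hi)), neg_sub]

section SortDesc

variable {n : ℕ}

theorem antitone_sortDesc (a : Fin n → ℝ) : Antitone (sortDesc a) := fun _ _ hjk =>
  neg_le_neg_iff.1 (Tuple.monotone_sort (fun i => -a i) hjk)

theorem sum_sortDesc (a : Fin n → ℝ) : ∑ j, sortDesc a j = ∑ i, a i :=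
  Equiv.sum_comp (Tuple.sort fun i => -a i) a

theorem monotone_sortDesc : Monotone (sortDesc : (Fin n → ℝ) → Fin n → ℝ) := fun a b hab =>
  comp_perm_le_comp_perm_of_antitone (antitone_sortDesc a) (antitone_sortDesc b) hab

theorem sum_abs_sortDesc_sub_sortDesc_of_le {a b : Fin n → ℝ} (hab : a ≤ b) :
    ∑ j, |sortDesc a j - sortDesc b j| = ∑ i, |a i - b i| := by
  rw [sum_abs_sub_of_le fun j _ => monotone_sortDesc hab j, sum_abs_sub_of_le fun i _ => hab i,
    sum_sortDesc, sum_sortDesc]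

theorem sum_abs_sortDesc_sub_sortDesc_of_le_or_le {a b : Fin n → ℝ} (hab : a ≤ b ∨ b ≤ a) :
    ∑ j, |sortDesc a j - sortDesc b j| = ∑ i, |a i - b i| := by
  obtain hab | hba := hab
  · exact sum_abs_sortDesc_sub_sortDesc_of_le hab
  · simpa only [abs_sub_comm] using sum_abs_sortDesc_sub_sortDesc_of_le hba

end SortDesc

/-- telescoping bound on order statistics from the proof of Theorem 3.
If `a, a' ∈ ℝⁿ` differ in at most the single coordinate `i₀`, then
`∑_j |a_{(j)} − a'_{(j)}| = |a_{i₀} − a'_{i₀}|`. -/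
theorem stmt_17 (n : ℕ) (hn : 1 ≤ n) (a a' : Fin n → ℝ) (i₀ : Fin n)
    (h : ∀ i, i ≠ i₀ → a i = a' i) :
    ∑ j : Fin n, |sortDesc a j - sortDesc a' j| = |a i₀ - a' i₀| := by
  calc
    ∑ j, |sortDesc a j - sortDesc a' j| = ∑ i, |a i - a' i| :=
      sum_abs_sortDesc_sub_sortDesc_of_le_or_le (le_or_le_of_forall_ne_eq h)
    _ = |a i₀ - a' i₀| :=
      Fintype.sum_eq_single i₀ fun i hi => by rw [h i hi, sub_self, abs_zero]
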